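/- For all positive real numbers a and b with a ≠ b, the inequality exp(ψ(L(a,b))) < (Γ(a)/Γ(b))^{1/(a−b)} holds, where L(a,b) = (b−a)/(ln b − ln a) is the logarithmic mean of a and b. -/

import Mathlib

/-!
Write `L` for the logarithmic mean of `a < b`. After taking logarithms the claim is
`(b - a) ψ(L) < log Γ(b) - log Γ(a)`. Using `Γ(x + 1) = x Γ(x)` and `ψ(x + 1) = ψ(x) + 1 / x`,
the difference of the two sides can be moved from `(a, b, L)` to `(a + N, b + N, L + N)` at the
cost of the sum over `n < N` of
`(b - a) / (L + n) - log ((b + n) / (a + n))`.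

The `n`-th summand is `0` for `n = 0` and positive for `n > 0` (`log_shift_lt`): this is Jensen's
inequality for the convex function `u ↦ -u / (1 + n u)` of `u = 1 / t`, since `1 / L` is the mean
of `1 / t` over `[a, b]`. Convexity of `log Γ` gives `log (x - 1) ≤ ψ(x) ≤ log x`, so the shifted
difference is at least `(b - a) (log (a + N - 1) - log (L + N))`, which tends to `0`. The difference
is therefore at least the summand with `n = 1`, which is positive.
-/

open Real

/-- The digamma function `ψ = Γ′/Γ`. -/
noncomputable def digamma (x : ℝ) : ℝ := deriv Real.Gamma x / Real.Gamma x

lemma hasDerivAt_logGamma {x : ℝ} (hx : 0 < x) :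
    HasDerivAt (Real.log ∘ Real.Gamma) (digamma x) x := by
  have h : DifferentiableAt ℝ Real.Gamma x :=
    Real.differentiableAt_Gamma fun m => by
      have : (0 : ℝ) ≤ m := m.cast_nonneg
      linarith
  exact h.hasDerivAt.log (Real.Gamma_pos_of_pos hx).ne'

lemma logGamma_add_one {x : ℝ} (hx : 0 < x) :
    Real.log (Real.Gamma (x + 1)) = Real.log (Real.Gamma x) + Real.log x := by
  rw [Real.Gamma_add_one hx.ne', Real.log_mul hx.ne' (Real.Gamma_pos_of_pos hx).ne', add_comm]

lemma digamma_add_one {x : ℝ} (hx : 0 < x) : digamma (x + 1) = digamma x + 1 / x := by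
  have h1 : HasDerivAt (fun y => (Real.log ∘ Real.Gamma) (y + 1)) (digamma (x + 1)) x :=
    (hasDerivAt_logGamma (by linarith : 0 < x + 1)).comp_add_const x 1
  have h2 : HasDerivAt (fun y => (Real.log ∘ Real.Gamma) y + Real.log y) (digamma x + x⁻¹) x :=
    (hasDerivAt_logGamma hx).add (Real.hasDerivAt_log hx.ne')
  have h3 := h2.congr_of_eventuallyEq (f₁ := fun y => (Real.log ∘ Real.Gamma) (y + 1)) (by
    filter_upwards [lt_mem_nhds hx] with y hy
    exact logGamma_add_one hy)
  rw [h1.unique h3, one_div]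

lemma mul_digamma_le {x y : ℝ} (hx : 0 < x) (hxy : x < y) :
    (y - x) * digamma x ≤ Real.log (Real.Gamma y) - Real.log (Real.Gamma x) := by
  have h := Real.convexOn_log_Gamma.le_slope_of_hasDerivAt (Set.mem_Ioi.2 hx)
    (Set.mem_Ioi.2 (hx.trans hxy)) hxy (hasDerivAt_logGamma hx)
  rw [slope_def_field, le_div_iff₀ (by linarith)] at h
  simp only [Function.comp_apply] at h
  linarith

lemma le_mul_digamma {x y : ℝ} (hx : 0 < x) (hxy : x < y) :
    Real.log (Real.Gamma y) - Real.log (Real.Gamma x) ≤ (y - x) * digamma y := by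
  have h := Real.convexOn_log_Gamma.slope_le_of_hasDerivAt (Set.mem_Ioi.2 hx)
    (Set.mem_Ioi.2 (hx.trans hxy)) hxy (hasDerivAt_logGamma (hx.trans hxy))
  rw [slope_def_field, div_le_iff₀ (by linarith)] at h
  simp only [Function.comp_apply] at h
  linarith

lemma digamma_le_log {x : ℝ} (hx : 0 < x) : digamma x ≤ Real.log x := by
  have h := mul_digamma_le hx (lt_add_one x)
  rw [logGamma_add_one hx] at h
  linarith

lemma log_le_digamma_add_one {x : ℝ} (hx : 0 < x) : Real.log x ≤ digamma (x + 1) := by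
  have h := le_mul_digamma hx (lt_add_one x)
  rw [logGamma_add_one hx] at h
  linarith

/-- The integrated gap between `t ↦ -1 / (t + n)` and its tangent at `t = L`, where tangents are
taken in the variable `1 / t`; its derivative is `n (t - L)² / (t (t + n) (L + n)²)`. -/
noncomputable def tangentGap (L n t : ℝ) : ℝ :=
  t / (L + n) - Real.log (t + n) - (L / (L + n)) ^ 2 * (t / L - Real.log t)

lemma hasDerivAt_tangentGap {L n t : ℝ} (hL : 0 < L) (hn : 0 < n) (ht : 0 < t) :
    HasDerivAt (tangentGap L n) (n * (t - L) ^ 2 / (t * (t + n) * (L + n) ^ 2)) t := by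
  have h1 : HasDerivAt (fun t : ℝ => t / (L + n)) (1 / (L + n)) t := (hasDerivAt_id t).div_const _
  have h2 : HasDerivAt (fun t : ℝ => Real.log (t + n)) (1 / (t + n)) t :=
    ((hasDerivAt_id t).add_const n).log (by simp only [id]; positivity)
  have h3 : HasDerivAt (fun t : ℝ => t / L - Real.log t) (1 / L - t⁻¹) t :=
    ((hasDerivAt_id t).div_const _).sub (Real.hasDerivAt_log ht.ne')
  have h := (h1.sub h2).sub (h3.const_mul ((L / (L + n)) ^ 2))
  refine h.congr_deriv ?_
  field_simp
  ring

lemma tangentGap_lt_of_one_side {L n x y : ℝ} (hL : 0 < L) (hn : 0 < n) (hx : 0 < x)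
    (hxy : x < y) (h : L ≤ x ∨ y ≤ L) : tangentGap L n x < tangentGap L n y := by
  refine strictMonoOn_of_deriv_pos (convex_Icc x y) (fun t ht => ?_) (fun t ht => ?_)
    (Set.left_mem_Icc.2 hxy.le) (Set.right_mem_Icc.2 hxy.le) hxy
  · exact (hasDerivAt_tangentGap hL hn (hx.trans_le ht.1)).continuousAt.continuousWithinAt
  · rw [interior_Icc] at ht
    have ht0 : 0 < t := hx.trans ht.1
    rw [(hasDerivAt_tangentGap hL hn ht0).deriv]
    have : t - L ≠ 0 := by
      rcases h with h | h
      · exact (sub_pos.2 (h.trans_lt ht.1)).ne'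
      · exact (sub_neg.2 (ht.2.trans_le h)).ne
    positivity

lemma tangentGap_lt {L n x y : ℝ} (hL : 0 < L) (hn : 0 < n) (hx : 0 < x)
    (hxy : x < y) : tangentGap L n x < tangentGap L n y := by
  rcases le_or_gt L x with h | h
  · exact tangentGap_lt_of_one_side hL hn hx hxy (Or.inl h)
  rcases le_or_gt y L with h' | h'
  · exact tangentGap_lt_of_one_side hL hn hx hxy (Or.inr h')
  · exact (tangentGap_lt_of_one_side hL hn hx h (Or.inr le_rfl)).trans
      (tangentGap_lt_of_one_side hL hn hL h' (Or.inl le_rfl))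

/-- The hypothesis `hlog` says that `L` is the logarithmic mean of `a` and `b`. -/
lemma log_shift_lt {a b L n : ℝ} (ha : 0 < a) (hab : a < b) (hL : 0 < L) (hn : 0 < n)
    (hlog : Real.log b - Real.log a = (b - a) / L) :
    Real.log (b + n) - Real.log (a + n) < (b - a) / (L + n) := by
  have h := tangentGap_lt hL hn ha hab
  -- the logarithmic terms of the tangent cancel because `1 / L` is the mean of `1 / t`
  have h0 : (L / (L + n)) ^ 2 * (b / L - Real.log b)
      = (L / (L + n)) ^ 2 * (a / L - Real.log a) := by
    have : b / L - Real.log b = a / L - Real.log a := by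
      rw [sub_div] at hlog
      linarith
    rw [this]
  unfold tangentGap at h
  rw [sub_div]
  linarith

/-- Shifting all arguments by `N` lowers `log Γ(b) - log Γ(a) - (b - a) ψ(L)` by the sum of the
summands `n < N`, hence by at least the summand with `n = 1` as soon as `N ≥ 2`. -/
lemma shift_gap {a b L : ℝ} (ha : 0 < a) (hab : a < b) (hL : 0 < L)
    (hlog : Real.log b - Real.log a = (b - a) / L) (N : ℕ) :
    Real.log (Real.Gamma (b + (N + 2))) - Real.log (Real.Gamma (a + (N + 2)))
        - (b - a) * digamma (L + (N + 2))
        + ((b - a) / (L + 1) - (Real.log (b + 1) - Real.log (a + 1)))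
      ≤ Real.log (Real.Gamma b) - Real.log (Real.Gamma a) - (b - a) * digamma L := by
  have hb : 0 < b := ha.trans hab
  induction N with
  | zero =>
    have e : ∀ x : ℝ, x + (((0 : ℕ) : ℝ) + 2) = x + 1 + 1 := fun x => by push_cast; ring
    simp only [e]
    rw [logGamma_add_one (by linarith : 0 < b + 1), logGamma_add_one hb,
      logGamma_add_one (by linarith : 0 < a + 1), logGamma_add_one ha,
      digamma_add_one (by linarith : 0 < L + 1), digamma_add_one hL]
    have e1 : (b - a) * (digamma L + 1 / L + 1 / (L + 1))
      = (b - a) * digamma L + (b - a) / L + (b - a) / (L + 1) := by ring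
    rw [e1]
    linarith
  | succ N ih =>
    have hN : (0 : ℝ) < (N : ℝ) + 2 := by positivity
    have e : ∀ x : ℝ, x + (((N + 1 : ℕ) : ℝ) + 2) = x + ((N : ℝ) + 2) + 1 :=
      fun x => by push_cast; ring
    simp only [e]
    rw [logGamma_add_one (by linarith : 0 < b + ((N : ℝ) + 2)),
      logGamma_add_one (by linarith : 0 < a + ((N : ℝ) + 2)),
      digamma_add_one (by linarith : 0 < L + ((N : ℝ) + 2))]
    have h := log_shift_lt ha hab hL hN hlog
    have e1 : (b - a) * (digamma (L + ((N : ℝ) + 2)) + 1 / (L + ((N : ℝ) + 2)))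
      = (b - a) * digamma (L + ((N : ℝ) + 2)) + (b - a) / (L + ((N : ℝ) + 2)) := by ring
    rw [e1]
    linarith

lemma tendsto_log_sub_log (x y : ℝ) (hx : 0 < x) (hy : 0 < y) :
    Filter.Tendsto (fun N : ℕ => Real.log (x + N) - Real.log (y + N)) Filter.atTop (nhds 0) := by
  have h1 : Filter.Tendsto (fun N : ℕ => 1 + (x - y) / (y + N)) Filter.atTop (nhds (1 + 0)) :=
    tendsto_const_nhds.add (tendsto_const_nhds.div_atTop
      (Filter.tendsto_atTop_add_const_left _ y tendsto_natCast_atTop_atTop))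
  rw [add_zero] at h1
  have h2 := h1.log one_ne_zero
  rw [Real.log_one] at h2
  refine h2.congr fun N => ?_
  have hxN : 0 < x + N := by positivity
  have hyN : 0 < y + N := by positivity
  rw [← Real.log_div hxN.ne' hyN.ne']
  congr 1
  field_simp
  ring

lemma mul_digamma_logMean_lt {a b L : ℝ} (ha : 0 < a) (hab : a < b) (hL : 0 < L)
    (hlog : Real.log b - Real.log a = (b - a) / L) :
    (b - a) * digamma L < Real.log (Real.Gamma b) - Real.log (Real.Gamma a) := by
  have hlim := ((tendsto_log_sub_log (a + 1) (L + 2) (by linarith) (by linarith)).const_mul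
    (b - a)).add_const ((b - a) / (L + 1) - (Real.log (b + 1) - Real.log (a + 1)))
  have hle := le_of_tendsto' hlim (b := Real.log (Real.Gamma b) - Real.log (Real.Gamma a)
    - (b - a) * digamma L) fun N => by
      refine le_trans ?_ (shift_gap ha hab hL hlog N)
      have hN : (0 : ℝ) ≤ N := N.cast_nonneg
      have h1 := mul_digamma_le (x := a + (N + 2)) (y := b + (N + 2)) (by linarith) (by linarith)
      have h2 := log_le_digamma_add_one (x := a + 1 + N) (by linarith)
      have h3 := digamma_le_log (x := L + (N + 2)) (by linarith)
      rw [show a + 1 + (N : ℝ) + 1 = a + (N + 2) by ring] at h2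
      rw [show L + 2 + (N : ℝ) = L + (N + 2) by ring]
      have h4 := mul_le_mul_of_nonneg_left (sub_le_sub h2 h3) (sub_pos.2 hab).le
      have e : b + ((N : ℝ) + 2) - (a + (N + 2)) = b - a := by ring
      rw [e] at h1
      linarith
  have h1 := log_shift_lt ha hab hL one_pos hlog
  linarith

lemma exp_digamma_logMean_lt {a b : ℝ} (ha : 0 < a) (hab : a < b) :
    Real.exp (digamma ((b - a) / (Real.log b - Real.log a))) <
      (Real.Gamma a / Real.Gamma b) ^ (1 / (a - b)) := by
  have hb := ha.trans hab
  have hl : 0 < Real.log b - Real.log a := sub_pos.2 (Real.log_lt_log ha hab)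
  have hd : 0 < b - a := sub_pos.2 hab
  have h := mul_digamma_logMean_lt ha hab (div_pos hd hl) (by field_simp)
  have hGa := Real.Gamma_pos_of_pos ha
  have hGb := Real.Gamma_pos_of_pos hb
  rw [Real.rpow_def_of_pos (div_pos hGa hGb), Real.exp_lt_exp, Real.log_div hGa.ne' hGb.ne']
  have e : (Real.log (Real.Gamma a) - Real.log (Real.Gamma b)) * (1 / (a - b))
      = (Real.log (Real.Gamma b) - Real.log (Real.Gamma a)) / (b - a) := by
    rw [mul_one_div, ← neg_div_neg_eq, neg_sub, neg_sub]
  rw [e, lt_div_iff₀ hd]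
  linarith

theorem stmt_5 (a b : ℝ) (ha : 0 < a) (hb : 0 < b) (hab : a ≠ b) :
    Real.exp (digamma ((b - a) / (Real.log b - Real.log a))) <
      (Real.Gamma a / Real.Gamma b) ^ (1 / (a - b)) := by
  rcases lt_or_gt_of_ne hab with h | h
  · exact exp_digamma_logMean_lt ha h
  -- both sides are symmetric in `a` and `b`
  · have h1 := exp_digamma_logMean_lt hb h
    have e1 : (a - b) / (Real.log a - Real.log b) = (b - a) / (Real.log b - Real.log a) := by
      rw [← neg_div_neg_eq, neg_sub, neg_sub]
    have e2 : (Real.Gamma b / Real.Gamma a) ^ (1 / (b - a))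
        = (Real.Gamma a / Real.Gamma b) ^ (1 / (a - b)) := by
      have hp := div_pos (Real.Gamma_pos_of_pos ha) (Real.Gamma_pos_of_pos hb)
      rw [← inv_div (Real.Gamma a), Real.inv_rpow hp.le, ← Real.rpow_neg hp.le,
        ← neg_sub a b, one_div_neg_eq_neg_one_div, neg_neg]
    rwa [e1, e2] at h1
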